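/- Let g be the heat kernel on the flat torus D = [0,2π]². For every β ∈ (0, 4/3) there exists C_β > 0 such that for all t > 0 and x ∈ D: ∫_0^t ∫_D |∇_y g(s,x,y)|^β dy ds ≤ C_β t^{-3β/2 + 2}. -/

import Mathlib

open Real MeasureTheory

/-- The heat kernel on the flat torus `[0,2π]²`, given by the method of images. -/
noncomputable def torusHeatKernel (t : ℝ) (x y : ℝ × ℝ) : ℝ :=
  (1 / (4 * π * t)) * ∑' k : ℤ × ℤ,
    Real.exp (-((x.1 - y.1 + 2 * π * k.1) ^ 2 + (x.2 - y.2 + 2 * π * k.2) ^ 2) / (4 * t))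

section HeatKernelBounds

open HurwitzZeta

lemma cosKernel_eq_evenKernel_div_sqrt (a : UnitAddCircle) {T : ℝ} (hT : 0 < T) :
    cosKernel a T = evenKernel a (1 / T) / √T := by
  have hs : 0 < √T := Real.sqrt_pos.2 hT
  rw [evenKernel_functional_equation, one_div_one_div, ← Real.sqrt_eq_rpow, Real.sqrt_div' _ hT.le]
  simp
  field_simp

lemma sinKernel_eq_oddKernel_div_sqrt_pow (a : UnitAddCircle) {T : ℝ} (hT : 0 < T) :
    sinKernel a T = oddKernel a (1 / T) / √T ^ 3 := by
  have hs : 0 < √T := Real.sqrt_pos.2 hT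
  have h : (1 / T) ^ (3 / 2 : ℝ) = (1 / √T) ^ 3 := by
    rw [show (3 / 2 : ℝ) = (1 / 2) * (3 : ℕ) by norm_num, Real.rpow_mul (by positivity),
      Real.rpow_natCast, ← Real.sqrt_eq_rpow, Real.sqrt_div' _ hT.le, Real.sqrt_one]
  rw [oddKernel_functional_equation, one_div_one_div, h]
  field_simp

lemma hasDerivAt_cosKernel (a : ℝ) {T : ℝ} (hT : 0 < T) :
    HasDerivAt (fun a : ℝ ↦ cosKernel a T) (-2 * π * sinKernel a T) a := by
  have h := (hasDerivAt_jacobiTheta₂_fst (a : ℂ) (τ := Complex.I * T) (by simpa)).real_of_complex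
  have h' : (jacobiTheta₂' a (Complex.I * T)) = ((-2 * π * sinKernel a T : ℝ) : ℂ) := by
    push_cast
    rw [sinKernel_def]
    field_simp
  rw [h', Complex.ofReal_re] at h
  simpa [← cosKernel_def] using h

lemma summable_exp_neg_int_sq_div_four : Summable fun n : ℤ ↦ rexp (-(n : ℝ) ^ 2 / 4) := by
  refine (hasSum_int_evenKernel 0 (t := 1 / (4 * π)) (by positivity)).summable.congr fun n ↦ ?_
  congr 1
  field_simp
  ring

lemma mul_exp_neg_sq_mul_le {u X : ℝ} (hX : 0 < X) :
    u * rexp (-u ^ 2 * X) ≤ 1 / √X := by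
  have hs : 0 < √X := Real.sqrt_pos.2 hX
  have h2 : √X ^ 2 = X := Real.sq_sqrt hX.le
  rw [le_div_iff₀ hs, mul_right_comm, neg_mul, Real.exp_neg, ← div_eq_mul_inv,
    div_le_one (Real.exp_pos _)]
  have := Real.add_one_le_exp (u ^ 2 * X)
  have h3 : u ^ 2 * X = (u * √X) ^ 2 := by rw [mul_pow, h2]
  nlinarith [sq_nonneg (u * √X - 1 / 2)]

lemma add_int_sq_lower_bound {a : ℝ} (ha : |a| ≤ 1 / 2) (n : ℤ) :
    a ^ 2 + (n : ℝ) ^ 2 / 4 ≤ 2 * (n + a) ^ 2 := by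
  obtain ⟨h1, h2⟩ := abs_le.1 ha
  rcases lt_trichotomy n 0 with h | rfl | h
  · have : (n : ℝ) ≤ -1 := by exact_mod_cast Int.le_sub_one_of_lt h
    have : (n : ℝ) / 2 + a ≤ 0 := by linarith
    nlinarith
  · simp; nlinarith
  · have : (1 : ℝ) ≤ n := by exact_mod_cast h
    have : 0 ≤ (n : ℝ) / 2 + a := by linarith
    nlinarith

lemma exp_neg_two_mul_add_int_sq_le {a X : ℝ} (ha : |a| ≤ 1 / 2) (hX : 1 ≤ X) (n : ℤ) :
    rexp (-(2 * (n + a) ^ 2) * X) ≤ rexp (-a ^ 2 * X) * rexp (-(n : ℝ) ^ 2 / 4) := by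
  rw [← Real.exp_add, Real.exp_le_exp]
  have := add_int_sq_lower_bound ha n
  nlinarith [sq_nonneg (n : ℝ)]

lemma abs_evenKernel_le {a X : ℝ} (ha : |a| ≤ 1 / 2) (hX : 1 ≤ X) :
    |evenKernel a X| ≤ (∑' n : ℤ, rexp (-(n : ℝ) ^ 2 / 4)) * rexp (-a ^ 2 * X) := by
  rw [mul_comm]
  refine (hasSum_int_evenKernel a (zero_lt_one.trans_le hX)).norm_le_of_bounded
    (summable_exp_neg_int_sq_div_four.hasSum.mul_left _) fun n ↦ ?_
  rw [Real.norm_eq_abs, Real.abs_exp]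
  refine le_trans (Real.exp_le_exp.2 ?_) (exp_neg_two_mul_add_int_sq_le ha hX n)
  gcongr
  nlinarith [Real.pi_gt_three, sq_nonneg (n + a)]

lemma abs_oddKernel_le {a X : ℝ} (ha : |a| ≤ 1 / 2) (hX : 1 ≤ X) :
    |oddKernel a X| ≤ (∑' n : ℤ, rexp (-(n : ℝ) ^ 2 / 4)) * rexp (-a ^ 2 * X) / √X := by
  have hX0 := zero_lt_one.trans_le hX
  rw [mul_comm, div_eq_inv_mul, ← mul_assoc]
  refine (hasSum_int_oddKernel a hX0).norm_le_of_bounded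
    (summable_exp_neg_int_sq_div_four.hasSum.mul_left _) fun n ↦ ?_
  rw [norm_mul, Real.norm_eq_abs, Real.norm_eq_abs, Real.abs_exp]
  calc |n + a| * rexp (-π * (n + a) ^ 2 * X)
      ≤ |n + a| * rexp (-|n + a| ^ 2 * X + -(2 * (n + a) ^ 2) * X) := by
        gcongr
        rw [sq_abs]
        nlinarith [Real.pi_gt_three, mul_nonneg (sq_nonneg (n + a)) hX0.le]
    _ = |n + a| * rexp (-|n + a| ^ 2 * X) * rexp (-(2 * (n + a) ^ 2) * X) := by
        rw [Real.exp_add, mul_assoc]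
    _ ≤ 1 / √X * (rexp (-a ^ 2 * X) * rexp (-(n : ℝ) ^ 2 / 4)) := by
        gcongr
        · exact mul_exp_neg_sq_mul_le hX0
        · exact exp_neg_two_mul_add_int_sq_le ha hX n
    _ = _ := by ring

lemma abs_cosKernel_le {a T : ℝ} (hT : 1 ≤ T) :
    |cosKernel a T| ≤ ∑' n : ℤ, rexp (-(n : ℝ) ^ 2 / 4) := by
  have h := (hasSum_int_cosKernel a (zero_lt_one.trans_le hT)).norm_le_of_bounded
    summable_exp_neg_int_sq_div_four.hasSum fun n ↦ ?_
  · simpa using h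
  rw [norm_mul, show 2 * (π : ℂ) * Complex.I * a * n = ((2 * π * a * n : ℝ) : ℂ) * Complex.I by
    push_cast; ring, Complex.norm_exp_ofReal_mul_I, one_mul, Complex.norm_real, Real.norm_eq_abs,
    Real.abs_exp, Real.exp_le_exp]
  nlinarith [Real.pi_gt_three, sq_nonneg (n : ℝ), mul_nonneg (sq_nonneg (n : ℝ)) (sub_nonneg.2 hT),
    mul_nonneg (mul_nonneg (sq_nonneg (n : ℝ)) (zero_le_one.trans hT))
      (sub_nonneg.2 Real.pi_gt_three.le)]

lemma abs_sinKernel_le {a T : ℝ} (hT : 1 ≤ T) :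
    |sinKernel a T| ≤ (∑' n : ℤ, rexp (-(n : ℝ) ^ 2 / 4)) / √T ^ 3 := by
  have hT0 := zero_lt_one.trans_le hT
  have hs : 0 < √T := Real.sqrt_pos.2 hT0
  have hs2 : √T ^ 2 = T := Real.sq_sqrt hT0.le
  have h := (hasSum_int_sinKernel a hT0).norm_le_of_bounded
    (summable_exp_neg_int_sq_div_four.hasSum.div_const (√T ^ 3)) fun n ↦ ?_
  · simpa using h
  rw [norm_mul, norm_mul, show 2 * (π : ℂ) * Complex.I * a * n =
    ((2 * π * a * n : ℝ) : ℂ) * Complex.I by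
    push_cast; ring, Complex.norm_exp_ofReal_mul_I, mul_one, Complex.norm_real, Real.norm_eq_abs,
    Real.abs_exp, norm_mul, norm_neg, Complex.norm_I, one_mul, Complex.norm_intCast]
  rcases eq_or_ne n 0 with rfl | hn
  · simp
  have hn1 : 1 ≤ |(n : ℝ)| := by exact_mod_cast Int.one_le_abs hn
  have hn2 : 1 ≤ (n : ℝ) ^ 2 := by rw [← sq_abs]; nlinarith
  have e1 := mul_exp_neg_sq_mul_le (u := |(n : ℝ)|) hT0
  have e2 : rexp (-(n : ℝ) ^ 2 * T) ≤ 1 / √T ^ 2 := by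
    rw [hs2, neg_mul, Real.exp_neg, ← one_div]
    have := Real.add_one_le_exp ((n : ℝ) ^ 2 * T)
    gcongr
    nlinarith
  calc |(n : ℝ)| * rexp (-π * n ^ 2 * T)
      ≤ |(n : ℝ)| * rexp (-|(n : ℝ)| ^ 2 * T + -(n : ℝ) ^ 2 * T + -(n : ℝ) ^ 2 / 4) := by
        gcongr
        rw [sq_abs]
        nlinarith [mul_nonneg (sq_nonneg (n : ℝ)) (sub_nonneg.2 hT),
          mul_nonneg (mul_nonneg (sq_nonneg (n : ℝ)) hT0.le) (sub_nonneg.2 Real.pi_gt_three.le)]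
    _ = |(n : ℝ)| * rexp (-|(n : ℝ)| ^ 2 * T) * rexp (-(n : ℝ) ^ 2 * T)
          * rexp (-(n : ℝ) ^ 2 / 4) := by
        rw [Real.exp_add, Real.exp_add]; ring
    _ ≤ 1 / √T * (1 / √T ^ 2) * rexp (-(n : ℝ) ^ 2 / 4) := by gcongr
    _ = _ := by field_simp

lemma abs_sinKernel_mul_cosKernel_le {a b T : ℝ} (ha : |a| ≤ 1 / 2) (hb : |b| ≤ 1 / 2)
    (hT : 0 < T) :
    |sinKernel a T| * |cosKernel b T| ≤
      9 * (∑' n : ℤ, rexp (-(n : ℝ) ^ 2 / 4)) ^ 2 / √T ^ 3 *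
        (rexp (-a ^ 2 / T) * rexp (-b ^ 2 / T)) := by
  set K := ∑' n : ℤ, rexp (-(n : ℝ) ^ 2 / 4)
  have hK : 0 ≤ K := tsum_nonneg fun _ ↦ (Real.exp_pos _).le
  have hs : 0 < √T := Real.sqrt_pos.2 hT
  rcases le_total T 1 with h | h
  · have hX : 1 ≤ 1 / T := by rwa [le_div_iff₀ hT, one_mul]
    have h1 := abs_oddKernel_le ha hX
    have h2 := abs_evenKernel_le hb hX
    rw [mul_one_div, Real.sqrt_div' _ hT.le, Real.sqrt_one] at h1
    rw [mul_one_div] at h2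
    rw [cosKernel_eq_evenKernel_div_sqrt _ hT, sinKernel_eq_oddKernel_div_sqrt_pow _ hT, abs_div,
      abs_div, abs_of_pos hs, abs_of_pos (pow_pos hs 3)]
    calc _ ≤ K * rexp (-a ^ 2 / T) / (1 / √T) / √T ^ 3 * (K * rexp (-b ^ 2 / T) / √T) := by
          gcongr
      _ = 1 * K ^ 2 / √T ^ 3 * (rexp (-a ^ 2 / T) * rexp (-b ^ 2 / T)) := by
          field_simp
      _ ≤ _ := by gcongr; norm_num
  · have he (c : ℝ) (hc : |c| ≤ 1 / 2) : 1 ≤ 3 * rexp (-c ^ 2 / T) := by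
      have : c ^ 2 / T ≤ 1 := by
        rw [div_le_one hT]
        nlinarith [sq_abs c, abs_nonneg c]
      rw [neg_div, Real.exp_neg, ← div_eq_mul_inv, le_div_iff₀ (Real.exp_pos _), one_mul]
      exact (Real.exp_le_exp.2 this).trans Real.exp_one_lt_three.le
    calc _ ≤ K / √T ^ 3 * 1 * (K * 1) := by
          rw [mul_one, mul_one]
          exact mul_le_mul (abs_sinKernel_le h) (abs_cosKernel_le h) (abs_nonneg _) (by positivity)
      _ ≤ K / √T ^ 3 * (3 * rexp (-a ^ 2 / T)) * (K * (3 * rexp (-b ^ 2 / T))) := by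
          gcongr
          · exact he a ha
          · exact he b hb
      _ = _ := by ring

lemma torusHeatKernel_eq_cosKernel_mul_cosKernel {s : ℝ} (hs : 0 < s) (x y : ℝ × ℝ) :
    torusHeatKernel s x y = 1 / (4 * π ^ 2) *
      (cosKernel ((x.1 - y.1) / (2 * π) : ℝ) (s / π) *
        cosKernel ((x.2 - y.2) / (2 * π) : ℝ) (s / π)) := by
  have hT : 0 < s / π := by positivity
  have h (a : ℝ) := hasSum_int_evenKernel a (one_div_pos.2 hT)
  have hn (a : ℝ) := (h a).summable.norm
  rw [cosKernel_eq_evenKernel_div_sqrt _ hT, cosKernel_eq_evenKernel_div_sqrt _ hT,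
    div_mul_div_comm, Real.mul_self_sqrt hT.le, ← (h _).tsum_eq, ← (h _).tsum_eq,
    tsum_mul_tsum_of_summable_norm (hn _) (hn _), torusHeatKernel]
  have hterm (k : ℤ × ℤ) :
      rexp (-((x.1 - y.1 + 2 * π * k.1) ^ 2 + (x.2 - y.2 + 2 * π * k.2) ^ 2) / (4 * s)) =
      rexp (-π * (k.1 + (x.1 - y.1) / (2 * π)) ^ 2 * (1 / (s / π))) *
        rexp (-π * (k.2 + (x.2 - y.2) / (2 * π)) ^ 2 * (1 / (s / π))) := by
    rw [← Real.exp_add]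
    congr 1
    field_simp
    ring
  have hcoef : 1 / (4 * π * s) = 1 / (4 * π ^ 2) * (1 / (s / π)) := by field_simp
  simp_rw [hterm]
  rw [hcoef, mul_assoc, one_div_mul_eq_div (s / π)]

lemma norm_fderiv_torusHeatKernel_le {s : ℝ} (hs : 0 < s) (x y : ℝ × ℝ) :
    ‖fderiv ℝ (fun y ↦ torusHeatKernel s x y) y‖ ≤
      |sinKernel ((x.1 - y.1) / (2 * π) : ℝ) (s / π)| *
        |cosKernel ((x.2 - y.2) / (2 * π) : ℝ) (s / π)| +
      |sinKernel ((x.2 - y.2) / (2 * π) : ℝ) (s / π)| *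
        |cosKernel ((x.1 - y.1) / (2 * π) : ℝ) (s / π)| := by
  have hT : 0 < s / π := by positivity
  have h1 : HasFDerivAt (fun y : ℝ × ℝ ↦ cosKernel ((x.1 - y.1) / (2 * π) : ℝ) (s / π))
      (sinKernel ((x.1 - y.1) / (2 * π) : ℝ) (s / π) • ContinuousLinearMap.fst ℝ ℝ ℝ) y := by
    have h := (hasDerivAt_cosKernel ((x.1 - y.1) / (2 * π)) hT).comp_hasFDerivAt y
      (((hasFDerivAt_fst (𝕜 := ℝ) (p := y)).const_sub x.1).mul_const (2 * π)⁻¹)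
    refine h.congr_fderiv ?_
    ext <;> simp
    field_simp
  have h2 : HasFDerivAt (fun y : ℝ × ℝ ↦ cosKernel ((x.2 - y.2) / (2 * π) : ℝ) (s / π))
      (sinKernel ((x.2 - y.2) / (2 * π) : ℝ) (s / π) • ContinuousLinearMap.snd ℝ ℝ ℝ) y := by
    have h := (hasDerivAt_cosKernel ((x.2 - y.2) / (2 * π)) hT).comp_hasFDerivAt y
      (((hasFDerivAt_snd (𝕜 := ℝ) (p := y)).const_sub x.2).mul_const (2 * π)⁻¹)
    refine h.congr_fderiv ?_
    ext <;> simp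
    field_simp
  have hc : ‖1 / (4 * π ^ 2)‖ ≤ 1 := by
    rw [Real.norm_eq_abs, abs_of_pos (by positivity), div_le_one (by positivity)]
    nlinarith [Real.pi_gt_three]
  simp_rw [torusHeatKernel_eq_cosKernel_mul_cosKernel hs]
  rw [((h1.fun_mul h2).const_mul (1 / (4 * π ^ 2))).fderiv, norm_smul]
  refine (mul_le_of_le_one_left (norm_nonneg _) hc).trans ((norm_add_le _ _).trans ?_)
  rw [norm_smul, norm_smul, norm_smul, norm_smul, add_comm]
  simp only [Real.norm_eq_abs]
  rw [← mul_assoc, ← mul_assoc, mul_comm |cosKernel _ _|, mul_comm |cosKernel _ _|]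
  exact add_le_add (mul_le_of_le_one_right (by positivity) (ContinuousLinearMap.norm_fst_le ..))
    (mul_le_of_le_one_right (by positivity) (ContinuousLinearMap.norm_snd_le ..))

lemma exists_abs_sub_int_le_half {a : ℝ} (ha : |a| ≤ 1) :
    ∃ m ∈ ({-1, 0, 1} : Finset ℤ), |a - m| ≤ 1 / 2 := by
  obtain ⟨h1, h2⟩ := abs_le.1 ha
  rcases le_total a (-1 / 2) with h | h
  · exact ⟨-1, by simp, abs_le.2 ⟨by push_cast; linarith, by push_cast; linarith⟩⟩
  rcases le_total a (1 / 2) with h' | h'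
  · exact ⟨0, by simp, abs_le.2 ⟨by push_cast; linarith, by push_cast; linarith⟩⟩
  · exact ⟨1, by simp, abs_le.2 ⟨by push_cast; linarith, by push_cast; linarith⟩⟩

lemma coe_sub_intCast_unitAddCircle (a : ℝ) (m : ℤ) :
    ((a - m : ℝ) : UnitAddCircle) = (a : UnitAddCircle) := by
  rw [AddCircle.coe_sub, sub_eq_self, AddCircle.coe_eq_zero_iff]
  exact ⟨m, by simp⟩

lemma exists_norm_fderiv_torusHeatKernel_le_gaussian :
    ∃ A : ℝ, 0 < A ∧ ∀ s : ℝ, 0 < s → ∀ x ∈ Set.Icc ((0 : ℝ), (0 : ℝ)) (2 * π, 2 * π),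
      ∀ y ∈ Set.Icc ((0 : ℝ), (0 : ℝ)) (2 * π, 2 * π),
      ∃ m ∈ ({-1, 0, 1} : Finset ℤ), ∃ n ∈ ({-1, 0, 1} : Finset ℤ),
        ‖fderiv ℝ (fun y ↦ torusHeatKernel s x y) y‖ ≤ A * s ^ (-(3 / 2) : ℝ) *
          (rexp (-(1 / (4 * π * s)) * (y.1 - (x.1 - 2 * π * m)) ^ 2) *
            rexp (-(1 / (4 * π * s)) * (y.2 - (x.2 - 2 * π * n)) ^ 2)) := by
  set K := ∑' n : ℤ, rexp (-(n : ℝ) ^ 2 / 4) with hKdef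
  have hK : 0 < K := summable_exp_neg_int_sq_div_four.tsum_pos (fun _ ↦ (Real.exp_pos _).le) 0
    (Real.exp_pos _)
  refine ⟨18 * K ^ 2 * √π ^ 3, by positivity, fun s hs x hx y hy ↦ ?_⟩
  have hT : 0 < s / π := by positivity
  have habs (u v : ℝ) (hu : 0 ≤ u ∧ u ≤ 2 * π) (hv : 0 ≤ v ∧ v ≤ 2 * π) :
      |(u - v) / (2 * π)| ≤ 1 := by
    rw [abs_div, abs_of_pos (a := 2 * π) (by positivity), div_le_one (by positivity), abs_le]
    constructor <;> linarith
  obtain ⟨m, hm, hm'⟩ := exists_abs_sub_int_le_half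
    (habs x.1 y.1 ⟨hx.1.1, hx.2.1⟩ ⟨hy.1.1, hy.2.1⟩)
  obtain ⟨n, hn, hn'⟩ := exists_abs_sub_int_le_half
    (habs x.2 y.2 ⟨hx.1.2, hx.2.2⟩ ⟨hy.1.2, hy.2.2⟩)
  refine ⟨m, hm, n, hn, (norm_fderiv_torusHeatKernel_le hs x y).trans ?_⟩
  have e1 := abs_sinKernel_mul_cosKernel_le hm' hn' hT
  have e2 := abs_sinKernel_mul_cosKernel_le hn' hm' hT
  rw [coe_sub_intCast_unitAddCircle, coe_sub_intCast_unitAddCircle] at e1 e2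
  refine (add_le_add e1 e2).trans_eq ?_
  have hexp (u v : ℝ) (k : ℤ) : -((u - v) / (2 * π) - k) ^ 2 / (s / π) =
      -(1 / (4 * π * s)) * (v - (u - 2 * π * k)) ^ 2 := by
    field_simp
    ring
  have hpow : s ^ (-(3 / 2) : ℝ) = 1 / √s ^ 3 := by
    rw [Real.rpow_neg hs.le, show (3 / 2 : ℝ) = (1 / 2) * (3 : ℕ) by norm_num,
      Real.rpow_mul hs.le, Real.rpow_natCast, ← Real.sqrt_eq_rpow, one_div]
  have hs' : 0 < √s := Real.sqrt_pos.2 hs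
  have hpi : 0 < √π := Real.sqrt_pos.2 Real.pi_pos
  rw [hexp, hexp, hpow, Real.sqrt_div hs.le, ← hKdef]
  field_simp
  ring

lemma integrable_sum_exp_neg_mul_sub_sq {ι : Type*} (S : Finset ι) (c : ι → ℝ) {b : ℝ}
    (hb : 0 < b) : Integrable fun u : ℝ ↦ ∑ i ∈ S, rexp (-b * (u - c i) ^ 2) :=
  integrable_finsetSum _ fun i _ ↦ (integrable_exp_neg_mul_sq hb).comp_sub_right (c i)

lemma integral_sum_exp_neg_mul_sub_sq {ι : Type*} (S : Finset ι) (c : ι → ℝ) {b : ℝ}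
    (hb : 0 < b) : ∫ u : ℝ, ∑ i ∈ S, rexp (-b * (u - c i) ^ 2) = S.card * √(π / b) := by
  rw [integral_finsetSum _ fun i _ ↦ (integrable_exp_neg_mul_sq hb).comp_sub_right (c i)]
  have h (i : ι) : ∫ u : ℝ, rexp (-b * (u - c i) ^ 2) = √(π / b) := by
    rw [integral_sub_right_eq_self (fun u : ℝ ↦ rexp (-b * u ^ 2)), integral_gaussian]
  simp only [h, Finset.sum_const, nsmul_eq_mul]

lemma exists_integral_norm_fderiv_torusHeatKernel_rpow_le {β : ℝ} (hβ : 0 < β) :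
    ∃ B : ℝ, 0 < B ∧ ∀ s : ℝ, 0 < s → ∀ x ∈ Set.Icc ((0 : ℝ), (0 : ℝ)) (2 * π, 2 * π),
      ∫ y in Set.Icc ((0 : ℝ), (0 : ℝ)) (2 * π, 2 * π),
        ‖fderiv ℝ (fun y ↦ torusHeatKernel s x y) y‖ ^ β ≤ B * s ^ (-(3 * β) / 2 + 1) := by
  obtain ⟨A, hA, hbound⟩ := exists_norm_fderiv_torusHeatKernel_le_gaussian
  refine ⟨A ^ β * (36 * π ^ 2 / β), by positivity, fun s hs x hx ↦ ?_⟩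
  set b := β / (4 * π * s) with hbdef
  have hb : 0 < b := by positivity
  set S : Finset ℤ := {-1, 0, 1}
  set G : ℝ → ℝ → ℝ := fun v u ↦ ∑ m ∈ S, rexp (-b * (u - (v - 2 * π * m)) ^ 2)
  have hGint (v : ℝ) : Integrable (G v) := integrable_sum_exp_neg_mul_sub_sq S _ hb
  have hGval (v : ℝ) : ∫ u, G v u = 3 * √(π / b) := by
    rw [integral_sum_exp_neg_mul_sub_sq S _ hb]
    simp [S]
  have hG0 (u v : ℝ) : 0 ≤ G v u := Finset.sum_nonneg fun _ _ ↦ (Real.exp_pos _).le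
  have hF : Integrable (fun y : ℝ × ℝ ↦ A ^ β * s ^ (-(3 * β) / 2) * (G x.1 y.1 * G x.2 y.2)) :=
    ((hGint x.1).mul_prod (hGint x.2)).const_mul _
  have hpt : ∀ y ∈ Set.Icc ((0 : ℝ), (0 : ℝ)) (2 * π, 2 * π),
      ‖fderiv ℝ (fun y ↦ torusHeatKernel s x y) y‖ ^ β ≤
        A ^ β * s ^ (-(3 * β) / 2) * (G x.1 y.1 * G x.2 y.2) := by
    intro y hy
    obtain ⟨m, hm, n, hn, h⟩ := hbound s hs x hx y hy
    refine (Real.rpow_le_rpow (norm_nonneg _) h hβ.le).trans ?_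
    have hle (u v : ℝ) (k : ℤ) (hk : k ∈ S) :
        rexp (-(1 / (4 * π * s)) * (u - (v - 2 * π * k)) ^ 2) ^ β ≤ G v u := by
      rw [← Real.exp_mul]
      refine le_trans (le_of_eq ?_) (Finset.single_le_sum
        (f := fun m : ℤ ↦ rexp (-b * (u - (v - 2 * π * m)) ^ 2))
        (fun _ _ ↦ (Real.exp_pos _).le) hk)
      simp only [hbdef]
      congr 1
      ring
    rw [Real.mul_rpow (by positivity) (by positivity), Real.mul_rpow hA.le (by positivity),
      Real.mul_rpow (by positivity) (by positivity), ← Real.rpow_mul hs.le,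
      show -(3 / 2) * β = -(3 * β) / 2 by ring]
    gcongr
    · exact hle _ _ _ hm
    · exact hle _ _ _ hn
  calc _ ≤ ∫ y in Set.Icc ((0 : ℝ), (0 : ℝ)) (2 * π, 2 * π),
        A ^ β * s ^ (-(3 * β) / 2) * (G x.1 y.1 * G x.2 y.2) :=
        integral_mono_of_nonneg (.of_forall fun _ ↦ by positivity) hF.integrableOn
          ((ae_restrict_iff' measurableSet_Icc).2 (.of_forall hpt))
    _ ≤ ∫ y : ℝ × ℝ, A ^ β * s ^ (-(3 * β) / 2) * (G x.1 y.1 * G x.2 y.2) :=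
        setIntegral_le_integral hF (.of_forall fun y ↦
          mul_nonneg (by positivity) (mul_nonneg (hG0 _ _) (hG0 _ _)))
    _ = A ^ β * s ^ (-(3 * β) / 2) * (3 * √(π / b) * (3 * √(π / b))) := by
        rw [integral_const_mul, Measure.volume_eq_prod, integral_prod_mul, hGval, hGval]
    _ = A ^ β * (36 * π ^ 2 / β) * s ^ (-(3 * β) / 2 + 1) := by
        rw [mul_mul_mul_comm 3, Real.mul_self_sqrt (by positivity), Real.rpow_add hs, Real.rpow_one,
          hbdef]
        field_simp
        ring

end HeatKernelBounds

theorem torusHeatKernel_grad_Lbeta_time_bound (β : ℝ) (hβ : β ∈ Set.Ioo (0:ℝ) (4/3)) :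
    ∃ C : ℝ, 0 < C ∧ ∀ t : ℝ, 0 < t →
      ∀ x ∈ Set.Icc ((0:ℝ), (0:ℝ)) (2 * π, 2 * π),
      (∫ s in (0:ℝ)..t,
        ∫ y in Set.Icc ((0:ℝ), (0:ℝ)) (2 * π, 2 * π),
          ‖fderiv ℝ (fun y => torusHeatKernel s x y) y‖ ^ β)
        ≤ C * t ^ (-(3 * β) / 2 + 2) := by
  obtain ⟨hβ0, hβ1⟩ := hβ
  obtain ⟨B, hB, hbound⟩ := exists_integral_norm_fderiv_torusHeatKernel_rpow_le hβ0
  have hexp : 0 < -(3 * β) / 2 + 2 := by linarith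
  refine ⟨B / (-(3 * β) / 2 + 2), by positivity, fun t ht x hx ↦ ?_⟩
  have hr : -1 < -(3 * β) / 2 + 1 := by linarith
  calc _ ≤ ∫ s in (0 : ℝ)..t, B * s ^ (-(3 * β) / 2 + 1) := by
        rw [intervalIntegral.integral_of_le ht.le, intervalIntegral.integral_of_le ht.le]
        refine integral_mono_of_nonneg (.of_forall fun s ↦ ?_)
          ((intervalIntegral.intervalIntegrable_rpow' hr).const_mul B).1
          ((ae_restrict_iff' measurableSet_Ioc).2 (.of_forall fun s hs ↦ hbound s hs.1 x hx))
        exact integral_nonneg fun y ↦ by positivity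
    _ = _ := by
        rw [intervalIntegral.integral_const_mul, integral_rpow (.inl hr),
          show -(3 * β) / 2 + 1 + 1 = -(3 * β) / 2 + 2 by ring, Real.zero_rpow hexp.ne']
        ring
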